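/- Let Ω ⊂⊂ ℂ^m be a bounded domain with Lipschitz boundary, let F : Ω → ℂ^m be a holomorphic map, and let V ⊂ Ω be a nonempty open subset. Then F does not have a dense orbit in V; that is, there does not exist a sequence {p_n}_{n≥0} ⊂ Ω with F(p_n) = p_{n+1} for all n such that {p_n} ∩ V is dense in V. -/

import Mathlib

/-!
The idea is that a dense orbit would make all iterates of `F` extend holomorphically to a ball, and
that such a normal family cannot have a dense orbit.

Suppose that the orbit `p` is dense in `V`, and restart it at the centre of a ball `B ⊆ V`. By
induction on `n` there is a holomorphic map `G n` on `B` with `G n (p j) = p (n + j)` whenever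
`p j ∈ B`. Indeed `G n` maps a dense subset of `B` into `Ω`, hence `B` into `closure Ω`, and one wants
to extend `F ∘ G n` across the set where `G n` meets the boundary. The Lipschitz condition supplies a
direction `v` for which `G n x + ζ • v` stays in `Ω` for all `ζ` in a sector. Expanding
`F (G n x + ζ • v)` in powers of `ζ - w` at a point `w` of the sector, and interpolating the
coefficient estimates with the better ones near a point `x₁` with `G n x₁ ∈ Ω`
(`exists_local_extension`), one sees that the series converges at `ζ = 0`. The local extensions are
glued in `exists_extension`.

The maps `G n` take values in the bounded set `closure Ω`, so they are equicontinuous, and the orbit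
is uniformly recurrent with bounded gaps between return times. The maximum principle, applied in the
form of the Borel–Carathéodory inequality to sums of inner products `⟪p (n + l), G (n + l) x⟫`, forces
nearby orbit points to coincide (`no_holomorphic_recurrence`), which contradicts density.
-/

open Metric

/-- A bounded domain `Ω ⊆ ℂ^m` has Lipschitz boundary: near each boundary point, after a
unitary (holomorphic rotation) change of coordinates `A` and a translation `b`, `Ω` coincides
locally with the subgraph `{z : Im z_i < r z}` of a Lipschitz function `r` which does not
depend on the coordinate `Im z_i`. -/
def HasLipschitzBoundary {m : ℕ} (Ω : Set (EuclideanSpace ℂ (Fin m))) : Prop :=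
  ∀ p ∈ frontier Ω,
    ∃ (A : EuclideanSpace ℂ (Fin m) ≃ₗᵢ[ℂ] EuclideanSpace ℂ (Fin m))
      (b : EuclideanSpace ℂ (Fin m)) (C : NNReal)
      (r : EuclideanSpace ℂ (Fin m) → ℝ) (i : Fin m)
      (W : Set (EuclideanSpace ℂ (Fin m))),
      IsOpen W ∧ p ∈ W ∧ LipschitzWith C r ∧
      (∀ z w : EuclideanSpace ℂ (Fin m),
        (∀ j, j ≠ i → z j = w j) → (z i).re = (w i).re → r z = r w) ∧
      (∀ z ∈ W, z ∈ Ω ↔ ((A z + b) i).im < r (A z + b))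

open scoped Topology

/-! ### Holomorphy along complex lines -/

/-- Holomorphy along complex lines: the restriction of `f` to every complex line is holomorphic
on the part of the line lying in `U`. Together with continuity this is a convenient substitute for
holomorphy in several variables, stable under the limit processes used below. -/
def LineHol {E : Type*} [NormedAddCommGroup E] [NormedSpace ℂ E] (f : E → E) (U : Set E) : Prop :=
  ∀ x u : E, DifferentiableOn ℂ (fun ζ : ℂ => f (x + ζ • u)) {ζ : ℂ | x + ζ • u ∈ U}

theorem LineHol.mono {E : Type*} [NormedAddCommGroup E] [NormedSpace ℂ E] {f : E → E}
    {U U' : Set E} (h : LineHol f U) (hU : U' ⊆ U) : LineHol f U' :=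
  fun x u => (h x u).mono fun _ hζ => hU hζ

/-- The Schwarz lemma along the complex line through `x` and `y` gives a Lipschitz bound that
depends only on the bound for `f`. -/
theorem LineHol.norm_sub_le {E : Type*} [NormedAddCommGroup E] [NormedSpace ℂ E] {f : E → E}
    {x₀ : E} {R M : ℝ} (hR : 0 < R) (hf : LineHol f (ball x₀ R))
    (hM : ∀ x ∈ ball x₀ R, ‖f x‖ ≤ M) {x y : E} (hx : x ∈ ball x₀ (R / 2))
    (hy : y ∈ ball x₀ (R / 2)) : ‖f x - f y‖ ≤ 4 * M / R * ‖x - y‖ := by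
  have hx' : x ∈ ball x₀ R := ball_subset_ball (by linarith) hx
  have hy' : y ∈ ball x₀ R := ball_subset_ball (by linarith) hy
  have hMx := hM x hx'
  have hMy := hM y hy'
  have hM0 : 0 ≤ M := (norm_nonneg _).trans hMx
  by_cases hxy : x = y
  · subst hxy; simp
  have hpos : 0 < ‖x - y‖ := norm_pos_iff.2 (sub_ne_zero.2 hxy)
  by_cases hfar : R / 2 ≤ ‖x - y‖
  · calc ‖f x - f y‖ ≤ ‖f x‖ + ‖f y‖ := _root_.norm_sub_le _ _
      _ ≤ 4 * M / R * (R / 2) := by field_simp; linarith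
      _ ≤ _ := by gcongr
  push Not at hfar
  set u : E := ((‖x - y‖ : ℂ)⁻¹) • (x - y) with hu
  have hun : ‖u‖ = 1 := by
    rw [hu, norm_smul]; simp [hpos.ne']
  have hmaps : ∀ ζ ∈ ball (0 : ℂ) (R / 2), y + ζ • u ∈ ball x₀ R := by
    intro ζ hζ
    rw [mem_ball_zero_iff] at hζ
    rw [mem_ball, dist_eq_norm] at hy ⊢
    calc ‖y + ζ • u - x₀‖ = ‖(y - x₀) + ζ • u‖ := by congr 1; abel
      _ ≤ ‖y - x₀‖ + ‖ζ • u‖ := norm_add_le _ _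
      _ < R := by rw [norm_smul, hun]; linarith
  have key := Complex.dist_le_div_mul_dist_of_mapsTo_ball
    (f := fun ζ : ℂ => f (y + ζ • u)) (c := 0) (R₁ := R / 2) (R₂ := 2 * M)
    (z := (‖x - y‖ : ℂ)) ((hf y u).mono hmaps) ?_ ?_
  · have e : y + (‖x - y‖ : ℂ) • u = x := by
      rw [hu, smul_smul, mul_inv_cancel₀ (by exact_mod_cast hpos.ne'), one_smul]; abel
    simp only [e, zero_smul, add_zero, dist_eq_norm, sub_zero] at key
    refine key.trans (le_of_eq ?_)
    rw [Complex.norm_real, norm_norm]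
    field_simp
    ring
  · intro ζ hζ
    rw [mem_closedBall, dist_eq_norm]
    simp only [zero_smul, add_zero]
    have := hM _ (hmaps ζ hζ)
    exact (_root_.norm_sub_le _ _).trans (by linarith)
  · simpa using hfar

theorem LineHol.continuousOn_of_bounded {E : Type*} [NormedAddCommGroup E] [NormedSpace ℂ E]
    {f : E → E} {x₀ : E} {R M : ℝ} (hR : 0 < R) (hf : LineHol f (ball x₀ R))
    (hM : ∀ x ∈ ball x₀ R, ‖f x‖ ≤ M) : ContinuousOn f (ball x₀ (R / 2)) := by
  have hM0 : 0 ≤ M := (norm_nonneg _).trans (hM x₀ (mem_ball_self hR))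
  refine (LipschitzOnWith.of_dist_le_mul (K := ⟨4 * M / R, by positivity⟩) ?_).continuousOn
  intro x hx y hy
  rw [dist_eq_norm, dist_eq_norm]
  exact hf.norm_sub_le hR hM hx hy

/-! ### Tools from one complex variable -/

/-- If a power series in `s` with coefficients `a k ξ` (uniformly controlled on the disc of radius
`ρ`) depends holomorphically on `ξ` for each fixed `s`, then so does every coefficient. The induction
replaces the series by its shift, a difference quotient for `s ≠ 0` and a uniform limit of those at
`s = 0`. -/
theorem differentiableOn_coeff {E : Type*} [NormedAddCommGroup E] [NormedSpace ℂ E]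
    [CompleteSpace E] {S : Set ℂ} (hS : IsOpen S) {ρ : ℝ} (hρ : 0 < ρ) (n : ℕ) :
    ∀ (a : ℕ → ℂ → E) (M : ℝ), (∀ n, ∀ ξ ∈ S, ‖a n ξ‖ ≤ M / ρ ^ n) →
      (∀ s : ℂ, ‖s‖ < ρ → DifferentiableOn ℂ (fun ξ => ∑' k, s ^ k • a k ξ) S) →
      DifferentiableOn ℂ (a n) S := by
  have hsummable : ∀ (a : ℕ → ℂ → E) (M : ℝ), (∀ n, ∀ ξ ∈ S, ‖a n ξ‖ ≤ M / ρ ^ n) →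
      ∀ s : ℂ, ‖s‖ < ρ → ∀ ξ ∈ S, ∀ k, ‖s ^ k • a k ξ‖ ≤ M * (‖s‖ / ρ) ^ k := by
    intro a M ha s hs ξ hξ k
    rw [norm_smul, norm_pow, div_pow, mul_div_assoc', mul_comm M, mul_div_assoc]
    exact mul_le_mul_of_nonneg_left (ha k ξ hξ) (by positivity)
  have hgeo : ∀ (M : ℝ) (s : ℂ), ‖s‖ < ρ → Summable fun k : ℕ => M * (‖s‖ / ρ) ^ k :=
    fun M s hs => (summable_geometric_of_lt_one (by positivity) ((div_lt_one hρ).2 hs)).mul_left M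
  induction n with
  | zero =>
    intro a M ha hd
    refine (hd 0 (by simpa using hρ)).congr fun ξ _ => ?_
    rw [tsum_eq_single 0]
    · simp
    · intro k hk; simp [hk]
  | succ n ih =>
    intro a M ha hd
    have ha' : ∀ k, ∀ ξ ∈ S, ‖a (k + 1) ξ‖ ≤ (M / ρ) / ρ ^ k := fun k ξ hξ =>
      (ha (k + 1) ξ hξ).trans_eq (by rw [pow_succ']; field_simp)
    have hd0 : DifferentiableOn ℂ (a 0) S := by
      refine (hd 0 (by simpa using hρ)).congr fun ξ _ => ?_
      rw [tsum_eq_single 0]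
      · simp
      · intro k hk; simp [hk]
    -- away from `s = 0` the shifted series is a difference quotient of the original one
    have hne : ∀ s : ℂ, s ≠ 0 → ‖s‖ < ρ →
        DifferentiableOn ℂ (fun ξ => ∑' k, s ^ k • a (k + 1) ξ) S := by
      intro s hs0 hs
      refine (((hd s hs).sub hd0).const_smul s⁻¹).congr fun ξ hξ => ?_
      have h1 : Summable fun k => s ^ k • a k ξ :=
        (hgeo M s hs).of_norm_bounded (hsummable a M ha s hs ξ hξ)
      simp only [Pi.smul_apply, Pi.sub_apply]
      rw [h1.tsum_eq_zero_add]
      simp only [pow_zero, one_smul, add_sub_cancel_left]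
      rw [← tsum_const_smul'']
      refine tsum_congr fun k => ?_
      rw [smul_smul, pow_succ', ← mul_assoc, inv_mul_cancel₀ hs0, one_mul]
    refine ih (fun k => a (k + 1)) (M / ρ) ha' fun s hs => ?_
    by_cases hs0 : s ≠ 0
    · exact hne s hs0 hs
    push Not at hs0
    subst hs0
    let σ : ℕ → ℂ := fun j => ((ρ / (j + 2) : ℝ) : ℂ)
    have hσn : ∀ j, ‖σ j‖ = ρ / (j + 2) := fun j => by
      rw [Complex.norm_real, Real.norm_of_nonneg (by positivity)]
    have hσρ : ∀ j, ‖σ j‖ ≤ ρ / 2 := fun j => by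
      rw [hσn]; gcongr; linarith [(Nat.cast_nonneg j : (0 : ℝ) ≤ j)]
    have hlim : TendstoUniformlyOn (fun (j : ℕ) ξ => ∑' k, σ j ^ k • a (k + 1) ξ)
        (fun ξ => ∑' k, (0 : ℂ) ^ k • a (k + 1) ξ) Filter.atTop S := by
      have hσ0 : Filter.Tendsto (fun j : ℕ => ‖σ j‖ * (2 * |M| / ρ ^ 2)) Filter.atTop (𝓝 0) := by
        have : Filter.Tendsto (fun j : ℕ => ‖σ j‖) Filter.atTop (𝓝 0) := by
          simp only [hσn]
          exact Filter.Tendsto.div_atTop tendsto_const_nhds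
            (Filter.tendsto_atTop_add_const_right _ _ tendsto_natCast_atTop_atTop)
        simpa using this.mul_const (2 * |M| / ρ ^ 2)
      rw [Metric.tendstoUniformlyOn_iff]
      intro ε hε
      filter_upwards [hσ0.eventually (gt_mem_nhds hε)] with j hj ξ hξ
      refine lt_of_le_of_lt ?_ hj
      have hlt : ‖σ j‖ < ρ := (hσρ j).trans_lt (by linarith)
      have h1 : Summable fun k => σ j ^ k • a (k + 1) ξ :=
        (hgeo _ _ hlt).of_norm_bounded (hsummable _ _ ha' _ hlt ξ hξ)
      have h0 : ∑' k, (0 : ℂ) ^ k • a (k + 1) ξ = a 1 ξ := by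
        rw [tsum_eq_single 0]
        · simp
        · intro k hk; simp [hk]
      rw [h0, h1.tsum_eq_zero_add, dist_eq_norm]
      simp only [pow_zero, one_smul, zero_add, sub_add_cancel_left, norm_neg]
      refine (tsum_of_norm_bounded (g := fun k : ℕ => ‖σ j‖ * (|M| / ρ ^ 2) * (1 / 2) ^ k)
        (hasSum_geometric_two.mul_left _) fun k => ?_).trans_eq (by ring)
      rw [norm_smul, norm_pow, pow_succ']
      calc ‖σ j‖ * ‖σ j‖ ^ k * ‖a (k + 1 + 1) ξ‖
          ≤ ‖σ j‖ * (ρ / 2) ^ k * (|M| / ρ ^ (k + 1 + 1)) := by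
            gcongr
            · exact hσρ j
            · exact (ha _ ξ hξ).trans (by gcongr; exact le_abs_self M)
        _ = ‖σ j‖ * (|M| / ρ ^ 2) * (1 / 2) ^ k := by
            rw [div_pow, div_pow, one_pow, pow_succ, pow_succ]
            field_simp
    refine hlim.tendstoLocallyUniformlyOn.differentiableOn (Filter.Eventually.of_forall
      fun j => hne (σ j) ?_ ((hσρ j).trans_lt (by linarith))) hS
    rw [← norm_pos_iff, hσn]; positivity

/-- Hadamard's three circles theorem, obtained from the three lines theorem by the substitution
`ζ = exp z`. -/
theorem three_circles {E : Type*} [NormedAddCommGroup E] [NormedSpace ℂ E] {f : ℂ → E}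
    {r₁ r r₂ a b : ℝ} (hr₁ : 0 < r₁) (h₁ : r₁ < r) (h₂ : r < r₂)
    (hf : DifferentiableOn ℂ f (closedBall 0 r₂))
    (ha : ∀ ζ, ‖ζ‖ ≤ r₁ → ‖f ζ‖ ≤ a) (hb : ∀ ζ, ‖ζ‖ ≤ r₂ → ‖f ζ‖ ≤ b) :
    ‖f r‖ ≤ a ^ (1 - (Real.log r - Real.log r₁) / (Real.log r₂ - Real.log r₁)) *
      b ^ ((Real.log r - Real.log r₁) / (Real.log r₂ - Real.log r₁)) := by
  have hr : 0 < r := hr₁.trans h₁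
  have hr₂ : 0 < r₂ := hr.trans h₂
  have hle : ∀ z : ℂ, z.re ≤ Real.log r₂ → ‖Complex.exp z‖ ≤ r₂ := fun z hz => by
    rw [Complex.norm_exp]; exact (Real.exp_le_exp.2 hz).trans_eq (Real.exp_log hr₂)
  have hd : DifferentiableOn ℂ (fun z => f (Complex.exp z)) {z : ℂ | z.re ≤ Real.log r₂} := by
    refine hf.comp Complex.differentiable_exp.differentiableOn fun z hz => ?_
    rw [mem_closedBall_zero_iff]; exact hle z hz
  have hcl : closure (Complex.HadamardThreeLines.verticalStrip (Real.log r₁) (Real.log r₂)) ⊆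
      {z : ℂ | z.re ≤ Real.log r₂} := by
    refine closure_minimal (fun z hz => hz.2.le) ?_
    exact isClosed_le Complex.continuous_re continuous_const
  have key := Complex.HadamardThreeLines.norm_le_interp_of_mem_verticalClosedStrip'
    (f := fun z => f (Complex.exp z)) (z := (Real.log r : ℂ)) (a := a) (b := b)
    (Real.log_lt_log hr₁ (h₁.trans h₂)) ?_ (hd.mono hcl).diffContOnCl ?_ ?_ ?_
  · simpa [← Complex.ofReal_exp, Real.exp_log hr] using key
  · exact ⟨Real.log_le_log hr₁ h₁.le, Real.log_le_log hr h₂.le⟩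
  · refine ⟨b, ?_⟩
    rintro _ ⟨z, hz, rfl⟩
    exact hb _ (hle z hz.2)
  · intro z hz
    refine ha _ ?_
    rw [Complex.norm_exp, show z.re = Real.log r₁ from hz, Real.exp_log hr₁]
  · intro z hz
    exact hb _ (hle z (le_of_eq hz))

/-! ### Extension across the boundary -/

/-- Extension of `F ∘ g` across the points that `g` sends to the boundary of `Ω`. The cone condition
`hcone` makes `ζ ↦ F (g x + ζ • v)` holomorphic on a sector with vertex `0`. Its Taylor coefficients
`a n x` at `w = -t i` are holomorphic along lines in `x`; they are `O((c t)⁻ⁿ)` on a whole ball and,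
since `g x₁ ∈ Ω`, they are `O((s/2)⁻ⁿ)` for a fixed `s` near `x₁`. Interpolation by three circles
gives `O(K⁻ⁿ)` near `x₀` with `K` of order `t ^ θ`, `θ < 1`, hence `K > t` for small `t`. The Taylor
series at `w` then converges at `ζ = 0`, and its value there is the extension. -/
theorem exists_local_extension {E : Type*} [NormedAddCommGroup E] [NormedSpace ℂ E]
    [FiniteDimensional ℂ E] {Ω : Set E} (hΩ : IsOpen Ω) {F : E → E}
    (hF : DifferentiableOn ℂ F Ω) {g : E → E} {x₀ x₁ v : E} {R δ C : ℝ} (hR : 0 < R)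
    (hδ : 0 < δ) (hC : 0 ≤ C) (hgc : ContinuousOn g (ball x₀ R)) (hgh : LineHol g (ball x₀ R))
    (hcone : ∀ x ∈ ball x₀ R, ∀ ζ : ℂ, ‖ζ‖ < δ → ζ.im + C * |ζ.re| < 0 → g x + ζ • v ∈ Ω)
    (hx₁ : x₁ ∈ ball x₀ (R / 10)) (hgx₁ : g x₁ ∈ Ω) :
    ∃ R' > 0, ∃ (h : E → E) (M : ℝ), LineHol h (ball x₀ R') ∧
      (∀ x ∈ ball x₀ R', ‖h x‖ ≤ M) ∧ ∀ x ∈ ball x₀ R', g x ∈ Ω → h x = F (g x) := by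
  have : ProperSpace E := FiniteDimensional.proper ℂ E
  have : CompleteSpace E := FiniteDimensional.complete ℂ E
  have hx₁R : x₁ ∈ ball x₀ R := ball_subset_ball (by linarith) hx₁
  let Ψ : E × ℂ → E := fun q => g q.1 + q.2 • v
  have hΨ : ContinuousOn Ψ (ball x₀ R ×ˢ Set.univ) :=
    (hgc.comp continuousOn_fst fun q hq => hq.1).add (by fun_prop)
  have hbound : ∀ K : Set (E × ℂ), IsCompact K → K ⊆ ball x₀ R ×ˢ Set.univ → K ⊆ Ψ ⁻¹' Ω →
      ∃ M, ∀ q ∈ K, ‖F (Ψ q)‖ ≤ M := fun K hK hKR hKΩ =>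
    hK.exists_bound_of_continuousOn (hF.continuousOn.comp (hΨ.mono hKR) hKΩ)
  -- a product neighbourhood of `(x₁, 0)` mapped into `Ω`
  obtain ⟨s, hs, hsR, hsΩ⟩ : ∃ s > 0, s < R / 5 ∧
      closedBall x₁ s ×ˢ closedBall (0 : ℂ) s ⊆ Ψ ⁻¹' Ω := by
    have hcont : ContinuousAt Ψ (x₁, 0) :=
      hΨ.continuousAt (prod_mem_nhds (isOpen_ball.mem_nhds hx₁R) Filter.univ_mem)
    have hnhds : Ψ ⁻¹' Ω ∈ 𝓝 (x₁, (0 : ℂ)) :=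
      hcont.preimage_mem_nhds (hΩ.mem_nhds (by simpa [Ψ] using hgx₁))
    obtain ⟨ε, hε, hεΩ⟩ := Metric.mem_nhds_iff.1 hnhds
    refine ⟨min (ε / 2) (R / 10), by positivity, (min_le_right _ _).trans_lt (by linarith), ?_⟩
    refine subset_trans ?_ hεΩ
    rw [← ball_prod_same]
    have : min (ε / 2) (R / 10) < ε := (min_le_left _ _).trans_lt (by linarith)
    exact Set.prod_mono (closedBall_subset_ball this) (closedBall_subset_ball this)
  have hsR' : closedBall x₁ s ⊆ ball x₀ R := by
    intro x hx
    rw [mem_closedBall] at hx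
    rw [mem_ball] at hx₁ ⊢
    linarith [dist_triangle x x₁ x₀]
  obtain ⟨M₁, hM₁⟩ := hbound _ ((isCompact_closedBall x₁ s).prod (isCompact_closedBall (0 : ℂ) s))
    (Set.prod_mono hsR' (Set.subset_univ _)) hsΩ
  -- weight of the large circle when interpolating from radii `s` and `R / 3` to radius `R / 5`
  set θ := (Real.log (R / 5) - Real.log s) / (Real.log (R / 3) - Real.log s) with hθ
  have hlog1 : Real.log s < Real.log (R / 5) := Real.log_lt_log hs hsR
  have hlog2 : Real.log (R / 5) < Real.log (R / 3) := Real.log_lt_log (by linarith) (by linarith)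
  have hθ1 : θ < 1 := by rw [hθ, div_lt_one (by linarith)]; linarith
  have hθ0 : 0 < θ := div_pos (by linarith) (by linarith)
  -- the disc of radius `c * t` about `-t i` lies inside the sector
  set c : ℝ := 1 / (2 * (C + 1)) with hc
  have hc0 : 0 < c := by positivity
  have hcC : c * (C + 1) = 1 / 2 := by rw [hc]; field_simp
  have hc1 : c ≤ 1 / 2 := by nlinarith
  set κ : ℝ := (s / 2) ^ (1 - θ) * c ^ θ with hκ
  have hκ0 : 0 < κ := by positivity
  obtain ⟨t, ht0, htδ, hts, htκ⟩ : ∃ t > 0, 2 * t < δ ∧ t ≤ s / 2 ∧ t ^ (1 - θ) < κ := by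
    have h1 : Filter.Tendsto (fun t : ℝ => t ^ (1 - θ)) (𝓝[>] 0) (𝓝 0) := by
      have := (Real.continuousAt_rpow_const 0 (1 - θ) (Or.inr (by linarith))).tendsto
      rw [Real.zero_rpow (by linarith)] at this
      exact this.mono_left nhdsWithin_le_nhds
    have h2 : ∀ᶠ t : ℝ in 𝓝[>] 0, t < min (δ / 2) (s / 2) :=
      nhdsWithin_le_nhds (gt_mem_nhds (by positivity))
    obtain ⟨t, ⟨ht1, ht2⟩, ht3⟩ :=
      ((h1.eventually (gt_mem_nhds hκ0)).and h2 |>.and self_mem_nhdsWithin).exists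
    exact ⟨t, ht3, by linarith [lt_min_iff.1 ht2], (lt_min_iff.1 ht2).2.le, ht1⟩
  set K : ℝ := (s / 2) ^ (1 - θ) * (c * t) ^ θ with hK
  have hK0 : 0 < K := by positivity
  have htK : t < K := by
    calc t = t ^ (1 - θ) * t ^ θ := by rw [← Real.rpow_add ht0]; simp
      _ < κ * t ^ θ := by gcongr
      _ = K := by rw [hK, hκ, Real.mul_rpow hc0.le ht0.le]; ring
  set w : ℂ := -(t * Complex.I) with hw
  have hwim : w.im = -t := by simp [hw]
  have hwre : w.re = 0 := by simp [hw]
  have hwn : ‖w‖ = t := by simp [hw, abs_of_pos ht0]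
  have hct : 0 < c * t := by positivity
  have hcone' : ∀ ζ ∈ closedBall w (c * t), ‖ζ‖ < δ ∧ ζ.im + C * |ζ.re| < 0 := by
    intro ζ hζ
    rw [mem_closedBall, dist_eq_norm] at hζ
    have h1 := (Complex.abs_im_le_norm (ζ - w)).trans hζ
    have h2 := (Complex.abs_re_le_norm (ζ - w)).trans hζ
    rw [Complex.sub_im, hwim] at h1
    rw [Complex.sub_re, hwre, sub_zero] at h2
    have h3 := (abs_le.1 h1).2
    refine ⟨?_, ?_⟩
    · calc ‖ζ‖ = ‖(ζ - w) + w‖ := by simp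
        _ ≤ ‖ζ - w‖ + ‖w‖ := norm_add_le _ _
        _ < δ := by rw [hwn]; nlinarith
    · nlinarith
  obtain ⟨M₀, hM₀⟩ := hbound _
    ((isCompact_closedBall x₀ (R / 2)).prod (isCompact_closedBall w (c * t)))
    (Set.prod_mono (closedBall_subset_ball (by linarith)) (Set.subset_univ _))
    (fun q hq => hcone q.1 (closedBall_subset_ball (by linarith) hq.1) q.2
      (hcone' _ hq.2).1 (hcone' _ hq.2).2)
  obtain ⟨M, hM, hM₀M, hM₁M⟩ : ∃ M > 0, M₀ ≤ M ∧ M₁ ≤ M :=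
    ⟨max 1 (max M₀ M₁), by positivity, by simp, by simp⟩
  let f : E → ℂ → E := fun x ζ => F (g x + ζ • v)
  have hfd : ∀ x, DifferentiableOn ℂ (f x) {ζ | g x + ζ • v ∈ Ω} := fun x =>
    hF.comp (by fun_prop) fun ζ hζ => hζ
  let a : ℕ → E → E := fun n x => (n.factorial : ℂ)⁻¹ • iteratedDeriv n (f x) w
  have hcauchy : ∀ x (r : ℝ), 0 < r → (∀ ζ ∈ closedBall w r, g x + ζ • v ∈ Ω) →
      (∀ ζ ∈ closedBall w r, ‖f x ζ‖ ≤ M) → ∀ n, ‖a n x‖ ≤ M / r ^ n := by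
    intro x r hr hxr hxM n
    have h1 := Complex.norm_iteratedDeriv_le_of_forall_mem_sphere_norm_le (f := f x) n hr
      ((hfd x).mono (fun ζ hζ => hxr ζ (closure_ball_subset_closedBall hζ))).diffContOnCl
      (fun ζ hζ => hxM ζ (sphere_subset_closedBall hζ))
    have hfac : (0 : ℝ) < n.factorial := by positivity
    simp only [a, norm_smul, norm_inv, Complex.norm_natCast]
    calc _ ≤ (n.factorial : ℝ)⁻¹ * (n.factorial * M / r ^ n) := by gcongr
      _ = M / r ^ n := by field_simp
  have haA : ∀ x ∈ closedBall x₀ (R / 2), ∀ n, ‖a n x‖ ≤ M / (c * t) ^ n := by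
    intro x hx
    refine hcauchy x _ hct (fun ζ hζ => ?_) (fun ζ hζ => (hM₀ (x, ζ) ⟨hx, hζ⟩).trans hM₀M)
    exact hcone x (closedBall_subset_ball (by linarith) hx) ζ (hcone' _ hζ).1 (hcone' _ hζ).2
  have haB : ∀ x ∈ closedBall x₁ s, ∀ n, ‖a n x‖ ≤ M / (s / 2) ^ n := by
    intro x hx
    have hsub : ∀ ζ ∈ closedBall w (s / 2), ζ ∈ closedBall (0 : ℂ) s := by
      intro ζ hζ
      rw [mem_closedBall, dist_eq_norm] at hζ
      rw [mem_closedBall_zero_iff]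
      calc ‖ζ‖ = ‖(ζ - w) + w‖ := by simp
        _ ≤ ‖ζ - w‖ + ‖w‖ := norm_add_le _ _
        _ ≤ s := by linarith
    exact hcauchy x _ (by positivity) (fun ζ hζ => hsΩ (show (x, ζ) ∈ _ from ⟨hx, hsub ζ hζ⟩))
      (fun ζ hζ => (hM₁ (x, ζ) ⟨hx, hsub ζ hζ⟩).trans hM₁M)
  have haH : ∀ n, LineHol (a n) (ball x₀ (R / 2)) := by
    intro n x u
    have hSo : IsOpen {ζ : ℂ | x + ζ • u ∈ ball x₀ (R / 2)} :=
      isOpen_ball.preimage (by fun_prop : Continuous fun ζ : ℂ => x + ζ • u)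
    refine differentiableOn_coeff hSo hct n (fun k ξ => a k (x + ξ • u)) M
      (fun k ξ hξ => haA _ (ball_subset_closedBall hξ) k) fun σ hσ => ?_
    have hmem : w + σ ∈ ball w (c * t) := by simpa using hσ
    have hin : ∀ y ∈ ball x₀ (R / 2), ∀ ζ ∈ ball w (c * t), g y + ζ • v ∈ Ω := fun y hy ζ hζ =>
      hcone y (ball_subset_ball (by linarith) hy) ζ (hcone' _ (ball_subset_closedBall hζ)).1
        (hcone' _ (ball_subset_closedBall hζ)).2
    have hdiff : DifferentiableOn ℂ (fun ξ : ℂ => F (g (x + ξ • u) + (w + σ) • v))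
        {ξ : ℂ | x + ξ • u ∈ ball x₀ (R / 2)} :=
      hF.comp (((hgh x u).mono fun ξ hξ => ball_subset_ball (by linarith) hξ).add_const _)
        fun ξ hξ => hin _ hξ _ hmem
    refine hdiff.congr fun ξ hξ => ?_
    have := Complex.hasSum_taylorSeries_on_ball (f := f (x + ξ • u)) (c := w)
      ((hfd _).mono fun ζ hζ => hin _ hξ ζ hζ) hmem
    refine Eq.trans (tsum_congr fun k => ?_) this.tsum_eq
    simp only [a, add_sub_cancel_left]
    rw [smul_comm]
  -- interpolation between the two coefficient estimates
  have haK : ∀ x ∈ ball x₀ (R / 10), ∀ n, ‖a n x‖ ≤ M / K ^ n := by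
    intro x hx n
    set u : E := ((R / 5 : ℝ) : ℂ)⁻¹ • (x - x₁) with hu
    have hR5 : ((R / 5 : ℝ) : ℂ) ≠ 0 := by
      rw [Complex.ofReal_ne_zero]; positivity
    have hxu : x₁ + ((R / 5 : ℝ) : ℂ) • u = x := by
      rw [hu, smul_smul, mul_inv_cancel₀ hR5, one_smul]; abel
    have hun : ‖u‖ ≤ 1 := by
      rw [hu, norm_smul, norm_inv, Complex.norm_real, Real.norm_of_nonneg (by positivity),
        inv_mul_le_iff₀ (by positivity), mul_one, ← dist_eq_norm]
      rw [mem_ball] at hx hx₁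
      linarith [dist_triangle_right x x₁ x₀]
    have hline : ∀ (ζ : ℂ) (r : ℝ), ‖ζ‖ ≤ r → x₁ + ζ • u ∈ closedBall x₁ r := by
      intro ζ r hζ
      rw [mem_closedBall, dist_eq_norm, add_sub_cancel_left, norm_smul]
      nlinarith [norm_nonneg ζ, norm_nonneg u]
    have hline3 : ∀ ζ : ℂ, ‖ζ‖ ≤ R / 3 → x₁ + ζ • u ∈ ball x₀ (R / 2) := by
      intro ζ hζ
      have h1 := hline ζ _ hζ
      rw [mem_closedBall] at h1
      rw [mem_ball] at hx₁ ⊢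
      linarith [dist_triangle (x₁ + ζ • u) x₁ x₀]
    have key := three_circles (f := fun ζ : ℂ => a n (x₁ + ζ • u)) (r := R / 5)
      (a := M / (s / 2) ^ n) (b := M / (c * t) ^ n) (r₂ := R / 3) hs hsR (by linarith)
      ((haH n x₁ u).mono fun ζ hζ => hline3 ζ (by simpa using hζ))
      (fun ζ hζ => haB _ (hline ζ s hζ) n)
      (fun ζ hζ => haA _ (ball_subset_closedBall (hline3 ζ hζ)) n)
    rw [hxu] at key
    refine key.trans_eq ?_
    have hpow : ∀ b e : ℝ, 0 < b → (b ^ n) ^ e = (b ^ e) ^ n := fun b e hb => by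
      rw [← Real.rpow_natCast b n, ← Real.rpow_mul hb.le, mul_comm, Real.rpow_mul hb.le,
        Real.rpow_natCast]
    rw [← hθ, Real.div_rpow hM.le (by positivity), Real.div_rpow hM.le (by positivity),
      div_mul_div_comm, ← Real.rpow_add hM, hpow _ _ (by positivity), hpow _ _ hct, ← mul_pow,
      ← hK]
    simp
  have hq : t / K < 1 := (div_lt_one hK0).2 htK
  have hterm : ∀ x ∈ ball x₀ (R / 10), ∀ n, ‖(-w) ^ n • a n x‖ ≤ M * (t / K) ^ n := by
    intro x hx n
    rw [norm_smul, norm_pow, norm_neg, hwn, div_pow, mul_div_assoc', mul_comm M, mul_div_assoc]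
    exact mul_le_mul_of_nonneg_left (haK x hx n) (by positivity)
  have hsum : HasSum (fun n : ℕ => M * (t / K) ^ n) (M * (1 - t / K)⁻¹) :=
    (hasSum_geometric_of_lt_one (by positivity) hq).mul_left M
  refine ⟨R / 10, by positivity, fun x => ∑' n, (-w) ^ n • a n x, M * (1 - t / K)⁻¹, ?_, ?_, ?_⟩
  · intro x u
    refine Complex.differentiableOn_tsum_of_summable_norm
      (F := fun n ζ => (-w) ^ n • a n (x + ζ • u)) hsum.summable
      (fun n => (((haH n).mono (ball_subset_ball (by linarith))) x u).const_smul _)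
      (isOpen_ball.preimage (by fun_prop : Continuous fun ζ : ℂ => x + ζ • u))
      (fun n ζ hζ => hterm _ hζ n)
  · intro x hx
    exact tsum_of_norm_bounded hsum (hterm x hx)
  · intro x hx hgx
    have hxR : x ∈ ball x₀ R := ball_subset_ball (by linarith) hx
    -- the sum of the Taylor series at `w`, on a disc containing the origin
    let P : ℂ → E := fun ζ => ∑' n, (ζ - w) ^ n • a n x
    obtain ⟨K', htK', hK'K⟩ := exists_between htK
    have hK'0 : 0 < K' := ht0.trans htK'
    have hPd : DifferentiableOn ℂ P (ball w K') := by
      refine Complex.differentiableOn_tsum_of_summable_norm (u := fun n => M * (K' / K) ^ n)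
        ((summable_geometric_of_lt_one (by positivity) ((div_lt_one hK0).2 hK'K)).mul_left M)
        (fun n => by fun_prop) isOpen_ball fun n ζ hζ => ?_
      rw [mem_ball, dist_eq_norm] at hζ
      rw [norm_smul, norm_pow, div_pow, mul_div_assoc', mul_comm M, mul_div_assoc]
      exact mul_le_mul (pow_le_pow_left₀ (norm_nonneg _) hζ.le n) (haK x hx n) (norm_nonneg _)
        (by positivity)
    let T : Set ℂ := ({ζ : ℂ | ζ.im + C * ζ.re < 0} ∩ {ζ : ℂ | ζ.im - C * ζ.re < 0}) ∩
      (ball 0 δ ∩ ball w K')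
    have hTo : IsOpen T :=
      ((isOpen_lt (by fun_prop) (by fun_prop)).inter (isOpen_lt (by fun_prop) (by fun_prop))).inter
        (isOpen_ball.inter isOpen_ball)
    have hTc : Convex ℝ T := by
      refine Convex.inter (Convex.inter ?_ ?_) ((convex_ball _ _).inter (convex_ball _ _))
      · exact convex_halfSpace_lt (f := fun ζ : ℂ => ζ.im + C * ζ.re)
          ⟨fun y z => by simp; ring, fun r y => by simp; ring⟩ 0
      · exact convex_halfSpace_lt (f := fun ζ : ℂ => ζ.im - C * ζ.re)
          ⟨fun y z => by simp; ring, fun r y => by simp; ring⟩ 0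
    have hTΩ : ∀ ζ ∈ T, g x + ζ • v ∈ Ω := by
      rintro ζ ⟨⟨h1, h2⟩, h3, -⟩
      refine hcone x hxR ζ (by simpa using h3) ?_
      simp only [Set.mem_ofPred_eq] at h1 h2
      rcases abs_cases ζ.re with ⟨h, _⟩ | ⟨h, _⟩ <;> rw [h] <;> linarith
    have hmemT : ∀ σ : ℝ, 0 < σ → σ ≤ t → -(σ * Complex.I) ∈ T := by
      intro σ hσ hσt
      refine ⟨⟨by simpa using hσ, by simpa using hσ⟩, ?_, ?_⟩
      · simp [abs_of_pos hσ]; linarith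
      · rw [mem_ball, dist_eq_norm, hw, show -((σ : ℂ) * Complex.I) - -(t * Complex.I) =
          ((t - σ : ℝ) : ℂ) * Complex.I by push_cast; ring]
        rw [norm_mul, Complex.norm_I, Complex.norm_real, Real.norm_of_nonneg (by linarith)]
        linarith
    have hwT : w ∈ T := hmemT t ht0 le_rfl
    have hinball : ∀ ζ ∈ ball w (c * t), g x + ζ • v ∈ Ω := fun ζ hζ =>
      hcone x hxR ζ (hcone' _ (ball_subset_closedBall hζ)).1
        (hcone' _ (ball_subset_closedBall hζ)).2
    have hev : f x =ᶠ[𝓝 w] P := by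
      filter_upwards [ball_mem_nhds w hct] with ζ hζ
      have := Complex.hasSum_taylorSeries_on_ball (f := f x) (c := w)
        ((hfd x).mono hinball) hζ
      refine Eq.trans this.tsum_eq.symm (tsum_congr fun k => ?_)
      simp only [a]
      rw [smul_comm]
    have heq : Set.EqOn (f x) P T :=
      ((hfd x).mono hTΩ).analyticOnNhd hTo |>.eqOn_of_preconnected_of_eventuallyEq
        ((hPd.mono fun ζ hζ => hζ.2.2).analyticOnNhd hTo) hTc.isPreconnected hwT hev
    -- both sides are continuous at the origin, which is a limit of points of `T`
    have hf0 : ContinuousAt (f x) 0 := by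
      have hop : IsOpen {ζ : ℂ | g x + ζ • v ∈ Ω} :=
        hΩ.preimage (by fun_prop : Continuous fun ζ : ℂ => g x + ζ • v)
      exact (hfd x).continuousOn.continuousAt (hop.mem_nhds (by simpa using hgx))
    have hP0 : ContinuousAt P 0 :=
      hPd.continuousOn.continuousAt (isOpen_ball.mem_nhds (by
        rw [mem_ball, dist_eq_norm, zero_sub, norm_neg, hwn]; exact htK'))
    have hpath : Filter.Tendsto (fun σ : ℝ => -((σ : ℂ) * Complex.I)) (𝓝[>] 0) (𝓝 0) := by
      have : Continuous fun σ : ℝ => -((σ : ℂ) * Complex.I) := by fun_prop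
      have h0 := this.tendsto 0
      simp only [Complex.ofReal_zero, zero_mul, neg_zero] at h0
      exact h0.mono_left nhdsWithin_le_nhds
    have hPf : P 0 = f x 0 := by
      refine tendsto_nhds_unique (hP0.tendsto.comp hpath)
        ((hf0.tendsto.comp hpath).congr' ?_)
      filter_upwards [Ioc_mem_nhdsGT ht0] with σ hσ
      exact heq (hmemT σ hσ.1 hσ.2)
    simpa [P, f] using hPf

/-- In a Lipschitz chart, translating a point of `closure Ω` by a small vector `ζ • A⁻¹ e_i` with `ζ`
in the sector `Im ζ < -C |Re ζ|` leads into `Ω`: the real part of `ζ` changes `r` by at most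
`C |Re ζ|`, and the imaginary part does not change `r` at all. -/
theorem mem_of_lipschitz_chart {m : ℕ} {Ω W : Set (EuclideanSpace ℂ (Fin m))}
    {A : EuclideanSpace ℂ (Fin m) ≃ₗᵢ[ℂ] EuclideanSpace ℂ (Fin m)}
    {b : EuclideanSpace ℂ (Fin m)} {C : NNReal} {r : EuclideanSpace ℂ (Fin m) → ℝ} {i : Fin m}
    (hW : IsOpen W) (hr : LipschitzWith C r)
    (hri : ∀ z w : EuclideanSpace ℂ (Fin m),
        (∀ j, j ≠ i → z j = w j) → (z i).re = (w i).re → r z = r w)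
    (hΩW : ∀ z ∈ W, z ∈ Ω ↔ ((A z + b) i).im < r (A z + b))
    {z : EuclideanSpace ℂ (Fin m)} (hz : z ∈ closure Ω) (hzW : z ∈ W) {ζ : ℂ}
    (hζW : z + ζ • A.symm (EuclideanSpace.single i 1) ∈ W) (hζ : ζ.im + C * |ζ.re| < 0) :
    z + ζ • A.symm (EuclideanSpace.single i 1) ∈ Ω := by
  have hAc : Continuous fun y => A y + b := A.continuous.add continuous_const
  have hle : ((A z + b) i).im ≤ r (A z + b) := by
    by_contra! hlt
    have hO : IsOpen (W ∩ {y | r (A y + b) < ((A y + b) i).im}) :=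
      hW.inter (isOpen_lt (hr.continuous.comp hAc) (by fun_prop))
    obtain ⟨y, ⟨hyW, hy⟩, hyΩ⟩ := mem_closure_iff.1 hz _ hO ⟨hzW, hlt⟩
    exact lt_asymm hy ((hΩW y hyW).1 hyΩ)
  rw [hΩW _ hζW]
  set e : EuclideanSpace ℂ (Fin m) := EuclideanSpace.single i 1 with he
  have hAz : A (z + ζ • A.symm e) + b = (A z + b) + ζ • e := by
    simp only [map_add, map_smul, LinearIsometryEquiv.apply_symm_apply]; abel
  have hr1 : r ((A z + b) + ζ • e) = r ((A z + b) + (ζ.re : ℂ) • e) := by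
    refine hri _ _ (fun j hj => ?_) ?_
    · simp [he, hj]
    · simp [he]
  have hen : ‖e‖ = 1 := by simp [he]
  have hr2 := hr.dist_le_mul ((A z + b) + (ζ.re : ℂ) • e) (A z + b)
  rw [Real.dist_eq, dist_eq_norm, add_sub_cancel_left, norm_smul, hen, mul_one,
    Complex.norm_real, Real.norm_eq_abs] at hr2
  have him : ((A z + b + ζ • e) i).im = ((A z + b) i).im + ζ.im := by simp [he]
  rw [hAz, hr1, him]
  have := (abs_le.1 hr2).1
  linarith

/-- If `g` maps `B` into `closure Ω` and a dense subset of `B` into `Ω`, then `F ∘ g` extends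
holomorphically to a neighbourhood of each point of `B`. -/
theorem exists_extension_near {m : ℕ} {Ω : Set (EuclideanSpace ℂ (Fin m))}
    (hΩ : IsOpen Ω) (hlip : HasLipschitzBoundary Ω)
    {F : EuclideanSpace ℂ (Fin m) → EuclideanSpace ℂ (Fin m)} (hF : DifferentiableOn ℂ F Ω)
    {g : EuclideanSpace ℂ (Fin m) → EuclideanSpace ℂ (Fin m)}
    {B : Set (EuclideanSpace ℂ (Fin m))} (hB : IsOpen B)
    (hgc : ContinuousOn g B) (hgh : LineHol g B) (hgΩ : ∀ x ∈ B, g x ∈ closure Ω)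
    (hgd : ∀ O, IsOpen O → O.Nonempty → O ⊆ B → ∃ x ∈ O, g x ∈ Ω)
    {x₀ : EuclideanSpace ℂ (Fin m)} (hx₀ : x₀ ∈ B) :
    ∃ R > 0, ball x₀ R ⊆ B ∧ ∃ h : EuclideanSpace ℂ (Fin m) → EuclideanSpace ℂ (Fin m),
      ContinuousOn h (ball x₀ R) ∧ LineHol h (ball x₀ R) ∧
      ∀ x ∈ ball x₀ R, g x ∈ Ω → h x = F (g x) := by
  have hga : ContinuousAt g x₀ := hgc.continuousAt (hB.mem_nhds hx₀)
  by_cases hgx : g x₀ ∈ Ω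
  · obtain ⟨R, hR, hsub⟩ := Metric.mem_nhds_iff.1
      (Filter.inter_mem (hB.mem_nhds hx₀) (hga.preimage_mem_nhds (hΩ.mem_nhds hgx)))
    have hRB : ball x₀ R ⊆ B := fun x hx => (hsub hx).1
    refine ⟨R, hR, hRB, fun x => F (g x), ?_, fun x u => ?_, fun _ _ _ => rfl⟩
    · exact hF.continuousOn.comp (hgc.mono hRB) fun x hx => (hsub hx).2
    · exact hF.comp ((hgh.mono hRB) x u) fun ζ hζ => (hsub hζ).2
  · have hfr : g x₀ ∈ frontier Ω := by
      rw [hΩ.frontier_eq]; exact ⟨hgΩ x₀ hx₀, hgx⟩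
    obtain ⟨A, b, C, r, i, W, hW, hgW, hr, hri, hΩW⟩ := hlip _ hfr
    set v := A.symm (EuclideanSpace.single i 1) with hv
    have hvn : ‖v‖ = 1 := by rw [hv, LinearIsometryEquiv.norm_map]; simp
    obtain ⟨δ, hδ, hδW⟩ := Metric.isOpen_iff.1 hW _ hgW
    obtain ⟨R, hR, hsub⟩ := Metric.mem_nhds_iff.1 (Filter.inter_mem (hB.mem_nhds hx₀)
      (hga.preimage_mem_nhds (ball_mem_nhds (g x₀) (half_pos hδ))))
    have hRB : ball x₀ R ⊆ B := fun x hx => (hsub hx).1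
    have hcone : ∀ x ∈ ball x₀ R, ∀ ζ : ℂ, ‖ζ‖ < δ / 2 → ζ.im + C * |ζ.re| < 0 →
        g x + ζ • v ∈ Ω := by
      intro x hx ζ hζ hζC
      have h1 : dist (g x) (g x₀) < δ / 2 := (hsub hx).2
      refine mem_of_lipschitz_chart hW hr hri hΩW (hgΩ x (hRB hx))
        (hδW (mem_ball.2 (by linarith))) (hδW ?_) hζC
      have h2 : dist (g x + ζ • v) (g x) < δ / 2 := by
        rw [dist_eq_norm, add_sub_cancel_left, norm_smul, hvn, mul_one]; exact hζ
      exact mem_ball.2 (by linarith [dist_triangle (g x + ζ • v) (g x) (g x₀)])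
    obtain ⟨x₁, hx₁, hgx₁⟩ := hgd (ball x₀ (R / 10)) isOpen_ball
      ⟨x₀, mem_ball_self (by positivity)⟩ ((ball_subset_ball (by linarith)).trans hRB)
    obtain ⟨R₁, hR₁, h, M, hh, hM, hhF⟩ := exists_local_extension hΩ hF hR (half_pos hδ) C.2
      (hgc.mono hRB) (hgh.mono hRB) hcone hx₁ hgx₁
    have hm : min R (R₁ / 2) ≤ R₁ := (min_le_right _ _).trans (by linarith)
    refine ⟨min R (R₁ / 2), by positivity, (ball_subset_ball (min_le_left _ _)).trans hRB, h,
      (LineHol.continuousOn_of_bounded hR₁ hh hM).mono (ball_subset_ball (min_le_right _ _)),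
      hh.mono (ball_subset_ball hm), fun x hx => hhF x (ball_subset_ball hm hx)⟩

/-- Global version of `exists_extension_near`. The local extensions agree on overlaps because they
are continuous and coincide with `F ∘ g` on a dense set. -/
theorem exists_extension {m : ℕ} {Ω : Set (EuclideanSpace ℂ (Fin m))}
    (hΩ : IsOpen Ω) (hlip : HasLipschitzBoundary Ω)
    {F : EuclideanSpace ℂ (Fin m) → EuclideanSpace ℂ (Fin m)} (hF : DifferentiableOn ℂ F Ω)
    {g : EuclideanSpace ℂ (Fin m) → EuclideanSpace ℂ (Fin m)}
    {B : Set (EuclideanSpace ℂ (Fin m))} (hB : IsOpen B)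
    (hgc : ContinuousOn g B) (hgh : LineHol g B) (hgΩ : ∀ x ∈ B, g x ∈ closure Ω)
    (hgd : ∀ O, IsOpen O → O.Nonempty → O ⊆ B → ∃ x ∈ O, g x ∈ Ω) :
    ∃ h : EuclideanSpace ℂ (Fin m) → EuclideanSpace ℂ (Fin m),
      ContinuousOn h B ∧ LineHol h B ∧ ∀ x ∈ B, g x ∈ Ω → h x = F (g x) := by
  choose! R hR hRB h hc hl hhF using fun x₀ (hx₀ : x₀ ∈ B) =>
    exists_extension_near hΩ hlip hF hB hgc hgh hgΩ hgd hx₀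
  have hself : ∀ x ∈ B, x ∈ ball x (R x) := fun x hx => mem_ball_self (hR x hx)
  have heq : ∀ y ∈ B, ∀ x ∈ ball y (R y), h x x = h y x := by
    intro y hy x hx
    have hxB : x ∈ B := hRB y hy hx
    by_contra hne
    have hO : IsOpen (ball x (R x) ∩ ball y (R y)) := isOpen_ball.inter isOpen_ball
    have hcd : ContinuousOn (fun z => (h x z, h y z)) (ball x (R x) ∩ ball y (R y)) :=
      ((hc x hxB).mono Set.inter_subset_left).prodMk ((hc y hy).mono Set.inter_subset_right)
    have hO' := hcd.isOpen_inter_preimage hO isClosed_diagonal.isOpen_compl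
    obtain ⟨z, ⟨⟨hz1, hz2⟩, hz3⟩, hzΩ⟩ := hgd _ hO' ⟨x, ⟨hself x hxB, hx⟩, hne⟩
      fun z hz => hRB x hxB hz.1.1
    exact hz3 ((hhF x hxB z hz1 hzΩ).trans (hhF y hy z hz2 hzΩ).symm)
  refine ⟨fun x => h x x, fun y hy => ?_, fun x u ζ hζ => ?_, fun x hx => hhF x hx x (hself x hx)⟩
  · have h1 := (hc y hy).continuousAt (ball_mem_nhds y (hR y hy))
    refine (h1.congr ?_).continuousWithinAt
    filter_upwards [ball_mem_nhds y (hR y hy)] with x hx using (heq y hy x hx).symm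
  · have hev : {ξ : ℂ | x + ξ • u ∈ ball (x + ζ • u) (R (x + ζ • u))} ∈ 𝓝 ζ :=
      (isOpen_ball.preimage (by fun_prop : Continuous fun ξ : ℂ => x + ξ • u)).mem_nhds
        (hself _ hζ)
    have h1 := (hl _ hζ x u).differentiableAt hev
    refine (h1.congr_of_eventuallyEq ?_).differentiableWithinAt
    filter_upwards [hev] with ξ hξ using heq _ hζ _ hξ

/-! ### Density of orbits -/

/-- Since no finite set is dense in a nonempty open set, a dense orbit visits every nonempty open
set at arbitrarily late times. -/
theorem exists_late_orbit_point {E : Type*} [NormedAddCommGroup E] [NormedSpace ℂ E]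
    [Nontrivial E] {p : ℕ → E} {V O : Set E} (hd : V ⊆ closure (Set.range p ∩ V))
    (hO : IsOpen O) (hOne : O.Nonempty) (hOV : O ⊆ V) (N : ℕ) : ∃ n, N ≤ n ∧ p n ∈ O := by
  have hfin : (p '' Set.Iio N).Finite := (Set.finite_Iio N).image p
  have hinf : O.Infinite := by
    obtain ⟨x, hx⟩ := hOne
    have := Module.punctured_nhds_neBot ℂ E x
    exact infinite_of_mem_nhds x (hO.mem_nhds hx)
  obtain ⟨x, hxO, hx⟩ := (hinf.sdiff hfin).nonempty
  obtain ⟨y, ⟨hyO, hy⟩, ⟨n, rfl⟩, -⟩ := mem_closure_iff.1 (hd (hOV hxO)) _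
    (hO.inter hfin.isClosed.isOpen_compl) ⟨hxO, hx⟩
  refine ⟨n, ?_, hyO⟩
  by_contra! hn
  exact hy ⟨n, hn, rfl⟩

/-! ### Holomorphic recurrence is impossible -/

/-- A bounded sequence, recurrently dense in a ball about `p 0`, cannot have all its shifts
`p j ↦ p (n + j)` induced by holomorphic maps `G n` of that ball. The `G n` are equicontinuous, so the
times `n` with `p (n + k)` uniformly close to `p k` have gaps bounded by some `L`. At an `n` nearly
maximising `∑ l ≤ L, ‖p (n + l)‖²`, the function `x ↦ ∑ l ≤ L, ⟪p (n + l), G (n + l) x⟫` nearly attains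
the maximum of its real part at the centre, so by Borel–Carathéodory it is nearly constant and
`p (n + l + j)` is close to `p (n + l)` for all `l ≤ L`. Choosing `l` with `n + l` a return time gives
`p j` close to `p 0`, contrary to the choice of `j`. -/
theorem no_holomorphic_recurrence {E : Type*} [NormedAddCommGroup E] [InnerProductSpace ℂ E]
    [FiniteDimensional ℂ E] [Nontrivial E] (p : ℕ → E) {M ρ : ℝ} (hρ : 0 < ρ)
    (hM : ∀ n, ‖p n‖ ≤ M)
    (hdense : ∀ O : Set E, IsOpen O → O.Nonempty → O ⊆ ball (p 0) ρ → ∀ N, ∃ n, N ≤ n ∧ p n ∈ O)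
    (G : ℕ → E → E) (hGc : ∀ n, ContinuousOn (G n) (ball (p 0) ρ))
    (hGh : ∀ n, LineHol (G n) (ball (p 0) ρ))
    (hG : ∀ n j, p j ∈ ball (p 0) ρ → G n (p j) = p (n + j)) : False := by
  have : ProperSpace E := FiniteDimensional.proper ℂ E
  have hM0 : 0 ≤ M := (norm_nonneg _).trans (hM 0)
  -- closed conditions on the values of continuous functions propagate from the orbit to the ball
  have hprop : ∀ φ : E → ℝ, ContinuousOn φ (ball (p 0) ρ) → ∀ c : ℝ,
      (∀ j, p j ∈ ball (p 0) ρ → φ (p j) ≤ c) → ∀ x ∈ ball (p 0) ρ, φ x ≤ c := by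
    intro φ hφ c hc x hx
    by_contra hcon
    push Not at hcon
    obtain ⟨n, -, hn⟩ := hdense (ball (p 0) ρ ∩ φ ⁻¹' Set.Ioi c)
      (hφ.isOpen_inter_preimage isOpen_ball isOpen_Ioi) ⟨x, hx, hcon⟩ Set.inter_subset_left 0
    exact absurd (hc n hn.1) (not_le.2 hn.2)
  have hGM : ∀ n, ∀ x ∈ ball (p 0) ρ, ‖G n x‖ ≤ M := by
    intro n
    refine hprop (fun x => ‖G n x‖) (hGc n).norm M ?_
    intro j hj
    simpa only [hG n j hj] using hM _
  -- equicontinuity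
  have hLip : ∀ i j k, p i ∈ ball (p 0) (ρ / 2) → p j ∈ ball (p 0) (ρ / 2) →
      ‖p (i + k) - p (j + k)‖ ≤ 4 * M / ρ * ‖p i - p j‖ := by
    intro i j k hi hj
    have := (hGh k).norm_sub_le hρ (hGM k) hi hj
    rwa [hG k i (ball_subset_ball (by linarith) hi), hG k j (ball_subset_ball (by linarith) hj),
      add_comm k i, add_comm k j] at this
  have hLip' : ∀ ε > 0, ∃ η > 0, η < ρ / 2 ∧ ∀ i j, p i ∈ ball (p 0) (ρ / 2) →
      p j ∈ ball (p 0) (ρ / 2) → ‖p i - p j‖ < η → ∀ k, ‖p (i + k) - p (j + k)‖ ≤ ε := by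
    intro ε hε
    refine ⟨min (ρ / 4) (ε / (4 * M / ρ + 1)), by positivity,
      (min_le_left _ _).trans_lt (by linarith), ?_⟩
    intro i j hi hj hij k
    have h1 := hLip i j k hi hj
    have h2 : ‖p i - p j‖ ≤ ε / (4 * M / ρ + 1) := hij.le.trans (min_le_right _ _)
    rw [le_div_iff₀ (by positivity)] at h2
    have := norm_nonneg (p i - p j)
    nlinarith
  -- the orbit returns close to its initial point, uniformly in all later times
  have hrec : ∀ ε > 0, ∀ N, ∃ n, N < n ∧ ∀ k, ‖p (n + k) - p k‖ ≤ ε := by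
    intro ε hε N
    obtain ⟨η, hη, hηρ, h⟩ := hLip' ε hε
    obtain ⟨n, hn, hnη⟩ := hdense (ball (p 0) η) isOpen_ball ⟨_, mem_ball_self hη⟩
      (ball_subset_ball (by linarith)) (N + 1)
    refine ⟨n, hn, fun k => ?_⟩
    have := h n 0 (ball_subset_ball hηρ.le hnη) (mem_ball_self (by linarith))
      (by rwa [mem_ball, dist_eq_norm] at hnη) k
    simpa using this
  -- return times have bounded gaps
  have hsynd : ∀ ε > 0, ∃ L : ℕ, ∀ n, ∃ l ≤ L, ∀ k, ‖p (n + l + k) - p k‖ ≤ ε := by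
    intro ε₀ hε₀
    obtain ⟨ε, hε, hεε₀, hερ⟩ : ∃ ε > 0, ε ≤ ε₀ ∧ ε < ρ / 2 :=
      ⟨min ε₀ (ρ / 4), by positivity, min_le_left _ _, (min_le_right _ _).trans_lt (by linarith)⟩
    obtain ⟨η, hη, -, h⟩ := hLip' (ε / 2) (by positivity)
    let S : Set ℕ := {n | ∀ k, ‖p (n + k) - p k‖ ≤ ε}
    have hSball : ∀ n ∈ S, p n ∈ ball (p 0) (ρ / 2) := by
      intro n hn
      rw [mem_ball, dist_eq_norm]
      exact (by simpa using hn 0 : ‖p n - p 0‖ ≤ ε).trans_lt hερ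
    have htb : TotallyBounded (p '' S) := by
      refine TotallyBounded.subset ?_ (isCompact_closedBall (p 0) (ρ / 2)).totallyBounded
      rintro _ ⟨n, hn, rfl⟩
      exact ball_subset_closedBall (hSball n hn)
    obtain ⟨T, hTS, hTfin, hT⟩ := totallyBounded_iff_subset.1 htb _ (dist_mem_uniformity hη)
    have hret : ∀ y ∈ T, ∃ n e : ℕ, n ∈ S ∧ p n = y ∧ 0 < e ∧
        ∀ k, ‖p (n + e + k) - p k‖ ≤ ε / 2 := by
      intro y hy
      obtain ⟨n, hn, rfl⟩ := hTS hy
      obtain ⟨m, hm, hmk⟩ := hrec (ε / 2) (by positivity) n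
      refine ⟨n, m - n, hn, rfl, by omega, fun k => ?_⟩
      rw [Nat.add_sub_cancel' hm.le]
      exact hmk k
    choose! ν e hν hνy he hek using hret
    have hnext : ∀ n ∈ S, ∃ l, 0 < l ∧ l ≤ hTfin.toFinset.sup e ∧ n + l ∈ S := by
      intro n hn
      obtain ⟨y, hy, hny⟩ : ∃ y ∈ T, dist (p n) y < η := by
        simpa using hT (Set.mem_image_of_mem p hn)
      refine ⟨e y, he y hy, Finset.le_sup (by simpa using hy), fun k => ?_⟩
      rw [← hνy y hy, dist_eq_norm] at hny
      have h1 := h n (ν y) (hSball n hn) (hSball _ (hν y hy)) hny (e y + k)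
      have h2 := hek y hy k
      rw [add_assoc] at h2 ⊢
      calc _ ≤ _ := norm_sub_le_norm_sub_add_norm_sub _ (p (ν y + (e y + k))) _
        _ ≤ ε := by linarith
    refine ⟨hTfin.toFinset.sup e, fun n => ?_⟩
    suffices ∃ l ≤ hTfin.toFinset.sup e, n + l ∈ S by
      obtain ⟨l, hl, hlS⟩ := this
      exact ⟨l, hl, fun k => (hlS k).trans hεε₀⟩
    induction n with
    | zero => exact ⟨0, Nat.zero_le _, fun k => by simpa using hε.le⟩
    | succ n ih =>
      obtain ⟨l, hl, hlS⟩ := ih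
      rcases Nat.eq_zero_or_pos l with rfl | hpos
      · obtain ⟨l', hl'0, hl', hl'S⟩ := hnext n hlS
        exact ⟨l' - 1, by omega, by rwa [show n + 1 + (l' - 1) = n + l' by omega]⟩
      · exact ⟨l - 1, by omega, by rwa [show n + 1 + (l - 1) = n + l by omega]⟩
  -- a second orbit point near the initial one
  obtain ⟨j, hjρ, hj0⟩ : ∃ j, p j ∈ ball (p 0) (ρ / 4) ∧ p j ≠ p 0 := by
    have : (𝓝[≠] (p 0)).NeBot := Module.punctured_nhds_neBot ℂ E (p 0)
    have hmem : ball (p 0) (ρ / 4) \ {p 0} ∈ 𝓝[≠] (p 0) :=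
      Filter.inter_mem (mem_nhdsWithin_of_mem_nhds (ball_mem_nhds _ (by linarith)))
        self_mem_nhdsWithin
    obtain ⟨n, -, hn⟩ := hdense _ (isOpen_ball.sdiff isClosed_singleton)
      (Filter.nonempty_of_mem hmem)
      (Set.sdiff_subset.trans (ball_subset_ball (by linarith))) 0
    exact ⟨n, hn.1, hn.2⟩
  rw [mem_ball, dist_eq_norm] at hjρ
  set η := ‖p j - p 0‖ with hη
  have hηpos : 0 < η := norm_pos_iff.2 (sub_ne_zero.2 hj0)
  obtain ⟨L, hL⟩ := hsynd (η / 4) (by positivity)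
  let Q : ℕ → ℝ := fun n => ∑ l ∈ Finset.range (L + 1), ‖p (n + l)‖ ^ 2
  have hQbdd : BddAbove (Set.range Q) := by
    refine ⟨∑ l ∈ Finset.range (L + 1), M ^ 2, ?_⟩
    rintro _ ⟨n, rfl⟩
    exact Finset.sum_le_sum fun l _ => pow_le_pow_left₀ (norm_nonneg _) (hM _) 2
  set δ := η ^ 2 / 40 with hδ
  have hδpos : 0 < δ := by positivity
  obtain ⟨_, ⟨n, rfl⟩, hn⟩ := exists_lt_of_lt_csSup (Set.range_nonempty Q)
    (show sSup (Set.range Q) - δ < sSup (Set.range Q) by linarith)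
  have hQ : ∀ i, Q i < Q n + δ := fun i => by
    have := le_csSup hQbdd ⟨i, rfl⟩
    linarith
  set u := p j - p 0 with hu
  have hmaps : ∀ ζ ∈ ball (0 : ℂ) 2, p 0 + ζ • u ∈ ball (p 0) ρ := by
    intro ζ hζ
    rw [mem_ball_zero_iff] at hζ
    rw [mem_ball, dist_eq_norm, add_sub_cancel_left, norm_smul]
    nlinarith [norm_nonneg ζ]
  have hGQ : ∀ x ∈ ball (p 0) ρ,
      ∑ l ∈ Finset.range (L + 1), ‖G (n + l) x‖ ^ 2 ≤ Q n + δ := by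
    refine hprop (fun x => ∑ l ∈ Finset.range (L + 1), ‖G (n + l) x‖ ^ 2)
      (continuousOn_finsetSum _ fun l _ => ((hGc (n + l)).norm.pow 2)) _ ?_
    intro i hi
    refine le_trans (le_of_eq ?_) (hQ (n + i)).le
    refine Finset.sum_congr rfl fun l _ => ?_
    rw [hG _ i hi, add_right_comm]
  have key := Complex.borelCaratheodory_zero (M := δ) (R := 2) (z := 1)
    (f := fun ζ : ℂ => ∑ l ∈ Finset.range (L + 1),
      (inner ℂ (p (n + l)) (G (n + l) (p 0 + ζ • u)) - (‖p (n + l)‖ : ℂ) ^ 2)) hδpos ?_ ?_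
      (by norm_num) (by simp) ?_
  · have e1 : p 0 + (1 : ℂ) • u = p j := by rw [hu, one_smul]; abel
    have hjb : p j ∈ ball (p 0) ρ := by rw [mem_ball, dist_eq_norm]; linarith
    simp only [e1, norm_one, hG _ j hjb] at key
    have hre := (Complex.abs_re_le_norm _).trans key
    have hsum : ∑ l ∈ Finset.range (L + 1), ‖p (n + l + j) - p (n + l)‖ ^ 2 ≤ 5 * δ := by
      have e2 : ∀ l, ‖p (n + l + j) - p (n + l)‖ ^ 2 = ‖p (n + j + l)‖ ^ 2 - ‖p (n + l)‖ ^ 2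
          - 2 * ((inner ℂ (p (n + l)) (p (n + l + j)) - (‖p (n + l)‖ : ℂ) ^ 2 : ℂ)).re := by
        intro l
        rw [← norm_neg, neg_sub, @norm_sub_sq ℂ, add_right_comm n j l]
        simp only [Complex.sub_re, RCLike.re_to_complex, ← Complex.ofReal_pow, Complex.ofReal_re]
        ring
      rw [Finset.sum_congr rfl fun l _ => e2 l, Finset.sum_sub_distrib, Finset.sum_sub_distrib,
        ← Finset.mul_sum, ← Complex.re_sum]
      have := hQ (n + j)
      have h3 := (abs_le.1 hre).1
      simp only [Q] at this
      linarith
    obtain ⟨l, hlL, hl⟩ := hL n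
    have h4 : ‖p (n + l + j) - p (n + l)‖ ^ 2 ≤ 5 * δ :=
      (Finset.single_le_sum (f := fun l => ‖p (n + l + j) - p (n + l)‖ ^ 2)
        (fun _ _ => by positivity) (Finset.mem_range.2 (by omega))).trans hsum
    have h5 : η / 2 ≤ ‖p (n + l + j) - p (n + l)‖ := by
      have a1 := hl 0
      have a2 := hl j
      have a3 : ‖p j - p 0‖ ≤ ‖p (n + l + j) - p j‖ + ‖p (n + l + j) - p (n + l)‖
          + ‖p (n + l) - p 0‖ := by
        rw [norm_sub_rev (p (n + l + j)) (p j)]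
        refine (norm_sub_le_norm_sub_add_norm_sub _ (p (n + l)) _).trans ?_
        gcongr
        exact norm_sub_le_norm_sub_add_norm_sub _ _ _
      rw [add_zero] at a1
      linarith
    nlinarith
  · refine DifferentiableOn.fun_sum fun l _ => DifferentiableOn.sub_const ?_ _
    exact (innerSL ℂ (p (n + l))).differentiable.comp_differentiableOn
      ((hGh (n + l) (p 0) u).mono hmaps)
  · intro ζ hζ
    have h1 := hGQ _ (hmaps ζ hζ)
    have h2 : ∀ l, ((inner ℂ (p (n + l)) (G (n + l) (p 0 + ζ • u)) - (‖p (n + l)‖ : ℂ) ^ 2 : ℂ)).re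
        ≤ (‖G (n + l) (p 0 + ζ • u)‖ ^ 2 - ‖p (n + l)‖ ^ 2) / 2 := by
      intro l
      have := re_inner_le_norm (𝕜 := ℂ) (p (n + l)) (G (n + l) (p 0 + ζ • u))
      simp only [Complex.sub_re, RCLike.re_to_complex, ← Complex.ofReal_pow, Complex.ofReal_re]
        at this ⊢
      nlinarith [sq_nonneg (‖p (n + l)‖ - ‖G (n + l) (p 0 + ζ • u)‖)]
    change Complex.re _ ≤ δ
    rw [Complex.re_sum]
    refine (Finset.sum_le_sum fun l _ => h2 l).trans ?_
    rw [← Finset.sum_div, Finset.sum_sub_distrib]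
    simp only [Q] at h1
    linarith
  · refine Finset.sum_eq_zero fun l _ => ?_
    rw [zero_smul, add_zero, hG _ 0 (mem_ball_self hρ), add_zero, inner_self_eq_norm_sq_to_K]
    simp

/-- **Main Theorem.** A holomorphic map on a bounded domain with Lipschitz boundary has no
orbit whose intersection with a given nonempty open subset `V ⊆ Ω` is dense in `V`. -/
theorem no_dense_orbit_of_lipschitz_boundary {m : ℕ} (hm : 0 < m)
    (Ω V : Set (EuclideanSpace ℂ (Fin m)))
    (hΩopen : IsOpen Ω) (hΩconn : IsConnected Ω) (hΩbdd : Bornology.IsBounded Ω)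
    (hΩlip : HasLipschitzBoundary Ω)
    (F : EuclideanSpace ℂ (Fin m) → EuclideanSpace ℂ (Fin m))
    (hF : DifferentiableOn ℂ F Ω)
    (hVopen : IsOpen V) (hVne : V.Nonempty) (hVΩ : V ⊆ Ω) :
    ¬ ∃ p : ℕ → EuclideanSpace ℂ (Fin m),
        (∀ n, p n ∈ Ω) ∧ (∀ n, F (p n) = p (n + 1)) ∧
        V ⊆ closure (Set.range p ∩ V) := by
  rintro ⟨p, hpΩ, hFp, hd⟩
  have : Nonempty (Fin m) := ⟨⟨0, hm⟩⟩
  have : Nontrivial (EuclideanSpace ℂ (Fin m)) := by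
    refine ⟨0, EuclideanSpace.single ⟨0, hm⟩ 1, fun h => ?_⟩
    simpa using congrArg norm h
  obtain ⟨i, -, hi⟩ := exists_late_orbit_point hd hVopen hVne subset_rfl 0
  obtain ⟨ρ, hρ, hρV⟩ := Metric.isOpen_iff.1 hVopen _ hi
  obtain ⟨M, hM⟩ := hΩbdd.exists_norm_le
  -- the orbit restarted at the centre of a ball contained in `V`
  let q : ℕ → EuclideanSpace ℂ (Fin m) := fun k => p (i + k)
  have hq0 : q 0 = p i := rfl
  have hdense : ∀ O, IsOpen O → O.Nonempty → O ⊆ ball (q 0) ρ → ∀ N, ∃ n, N ≤ n ∧ q n ∈ O := by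
    intro O hO hOne hOB N
    obtain ⟨n, hn, hpn⟩ := exists_late_orbit_point hd hO hOne (hOB.trans hρV) (i + N)
    obtain ⟨k, rfl⟩ := Nat.exists_eq_add_of_le hn
    exact ⟨N + k, by omega, by simpa only [q, ← add_assoc] using hpn⟩
  -- `G n` is the continuous extension to the ball of the `n`-th iterate of `F` on the orbit
  have hG : ∀ n, ∃ G : EuclideanSpace ℂ (Fin m) → EuclideanSpace ℂ (Fin m),
      ContinuousOn G (ball (q 0) ρ) ∧ LineHol G (ball (q 0) ρ) ∧
      ∀ j, q j ∈ ball (q 0) ρ → G (q j) = q (n + j) := by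
    intro n
    induction n with
    | zero =>
      exact ⟨id, continuousOn_id, fun x u => (by simp only [id]; fun_prop), fun j _ => by simp⟩
    | succ n ih =>
      obtain ⟨g, hgc, hgh, hg⟩ := ih
      have hgΩ : ∀ j, q j ∈ ball (q 0) ρ → g (q j) ∈ Ω := fun j hj => hg j hj ▸ hpΩ _
      have hgd : ∀ O, IsOpen O → O.Nonempty → O ⊆ ball (q 0) ρ → ∃ x ∈ O, g x ∈ Ω := by
        intro O hO hOne hOB
        obtain ⟨j, -, hj⟩ := hdense O hO hOne hOB 0
        exact ⟨q j, hj, hgΩ j (hOB hj)⟩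
      have hgcl : ∀ x ∈ ball (q 0) ρ, g x ∈ closure Ω := by
        intro x hx
        by_contra hxc
        obtain ⟨y, ⟨-, hy⟩, hyΩ⟩ := hgd _
          (hgc.isOpen_inter_preimage isOpen_ball isClosed_closure.isOpen_compl) ⟨x, hx, hxc⟩
          Set.inter_subset_left
        exact hy (subset_closure hyΩ)
      obtain ⟨h, hhc, hhh, hhF⟩ := exists_extension hΩopen hΩlip hF isOpen_ball hgc hgh hgcl hgd
      refine ⟨h, hhc, hhh, fun j hj => ?_⟩
      rw [hhF _ hj (hgΩ j hj), hg j hj, hFp]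
      congr 1
      omega
  choose G hGc hGh hGq using hG
  exact no_holomorphic_recurrence q hρ (fun n => hM _ (hpΩ _)) hdense G hGc hGh hGq
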